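/- Let X be a complex Banach space with a Schauder basis {eₙ}ₙ and let Y be any complex Banach space. Then the mapping Φ : 𝓗𝓛₀(B_X, Y) → 𝓗^∞_s(B_X, 𝓛(X,Y)), Φ(f) = df, is a surjective isometry, where 𝓗^∞_s(B_X, 𝓛(X,Y)) = { g ∈ 𝓗^∞(B_X, 𝓛(X,Y)) : e_k∘d(e_n∘g) = e_n∘d(e_k∘g) for all n, k ∈ ℕ }. -/

import Mathlib

open Metric Filter Topology

section aux15

variable {X Y : Type*} [NormedAddCommGroup X] [NormedSpace ℂ X]
    [NormedAddCommGroup Y] [NormedSpace ℂ Y]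

theorem aux_cauchy {h : X → Y} {c : X} {R M : ℝ} (hR : 0 < R)
    (hd : DifferentiableOn ℂ h (ball c R)) (hM : ∀ x ∈ ball c R, ‖h x‖ ≤ M) :
    ‖fderiv ℂ h c‖ ≤ 2 * M / R := by
  refine Complex.norm_fderiv_le_div_of_mapsTo_ball hd (fun x hx => ?_) hR
  rw [mem_closedBall, dist_eq_norm]
  have h1 := hM x hx
  have h2 := hM c (mem_ball_self hR)
  linarith [norm_sub_le (h x) (h c)]

theorem aux_da {h : X → Y} {c x : X} {R : ℝ} 
    (hd : DifferentiableOn ℂ h (ball c R)) (hx : x ∈ ball c R) : DifferentiableAt ℂ h x :=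
  hd.differentiableAt (isOpen_ball.mem_nhds hx)

theorem aux_sub {c x : X} {r s R : ℝ} (hx : x ∈ ball c r) (h : r + s ≤ R) :
    ball x s ⊆ ball c R := by
  apply ball_subset_ball'
  have := mem_ball.1 hx
  linarith

theorem aux_cauchy' {h : X → Y} {c : X} {R M : ℝ} (hR : 0 < R)
    (hd : DifferentiableOn ℂ h (ball c R)) (hM : ∀ x ∈ ball c R, ‖h x‖ ≤ M) 
    {x : X} (hx : x ∈ ball c (R/2)) :
    ‖fderiv ℂ h x‖ ≤ 4 * M / R := by
  have hs : ball x (R/2) ⊆ ball c R := aux_sub hx (by linarith)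
  have := aux_cauchy (half_pos hR) (hd.mono hs) (fun y hy => hM y (hs hy))
  calc _ ≤ _ := this
    _ = _ := by field_simp; ring

theorem aux_lip {h : X → Y} {c : X} {R M : ℝ} (hR : 0 < R)
    (hd : DifferentiableOn ℂ h (ball c R)) (hM : ∀ x ∈ ball c R, ‖h x‖ ≤ M) 
    {x : X} (hx : x ∈ ball c (R/8)) :
    ‖fderiv ℂ h x - fderiv ℂ h c‖ ≤ 64 * M / R ^ 2 * ‖x - c‖ := by
  have hb : ‖x - c‖ < R / 8 := by simpa [dist_eq_norm] using hx
  have hs0 : ball c (R/8) ⊆ ball c (R/2) := ball_subset_ball (by linarith)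
  have hs2 : ball c (R/2) ⊆ ball c R := ball_subset_ball (by linarith)
  have hs1 : ∀ w ∈ ball c (R/8), w + (x - c) ∈ ball c (R/2) := by
    intro w hw
    rw [mem_ball, dist_eq_norm] at hw ⊢
    have : w + (x - c) - c = (w - c) + (x - c) := by abel
    rw [this]
    linarith [norm_add_le (w - c) (x - c)]
  have hlip : ∀ w ∈ ball c (R/2), ∀ y ∈ ball c (R/2), ‖h y - h w‖ ≤ 4 * M / R * ‖y - w‖ := by
    intro w hw y hy
    let _ : NormedSpace ℝ X := NormedSpace.restrictScalars ℝ ℂ X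
    exact Convex.norm_image_sub_le_of_norm_fderiv_le (𝕜 := ℂ) (s := ball c (R/2))
      (fun z hz => aux_da hd (hs2 hz)) (fun z hz => aux_cauchy' hR hd hM hz)
      (convex_ball _ _) hw hy
  have hk : DifferentiableOn ℂ (fun w => h (w + (x - c)) - h w) (ball c (R/8)) := by
    intro w hw
    have h1 := aux_da hd (hs2 (hs1 w hw))
    have h2 := aux_da hd (hs2 (hs0 hw))
    apply DifferentiableAt.differentiableWithinAt
    exact ((differentiableAt_comp_add_right _).2 h1).sub h2
  have := aux_cauchy (by linarith) hk (M := 4 * M / R * ‖x - c‖) (fun w hw => by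
    have := hlip w (hs0 hw) _ (hs1 w hw)
    simpa using this)
  rw [fderiv_fun_sub, fderiv_comp_add_right] at this
  · simp only [add_sub_cancel] at this
    calc _ ≤ _ := this
      _ = _ := by field_simp; ring
  · refine (differentiableAt_comp_add_right _).2 ?_
    exact aux_da hd (hs2 (hs1 c (mem_ball_self (by linarith))))
  · exact aux_da hd (mem_ball_self hR)

theorem aux_taylor {h : X → Y} {c : X} {R M : ℝ} (hR : 0 < R)
    (hd : DifferentiableOn ℂ h (ball c R)) (hM : ∀ x ∈ ball c R, ‖h x‖ ≤ M) 
    {x : X} (hx : x ∈ ball c (R/8)) :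
    ‖h x - h c - fderiv ℂ h c (x - c)‖ ≤ 64 * M / R ^ 2 * ‖x - c‖ ^ 2 := by
  have hb : ‖x - c‖ < R / 8 := by simpa [dist_eq_norm] using hx
  have hM0 : 0 ≤ M := (norm_nonneg _).trans (hM c (mem_ball_self hR))
  have hs : closedBall c ‖x - c‖ ⊆ ball c (R/8) := closedBall_subset_ball hb
  have hs2 : ball c (R/8) ⊆ ball c R := ball_subset_ball (by linarith)
  let _ : NormedSpace ℝ X := NormedSpace.restrictScalars ℝ ℂ X
  have := Convex.norm_image_sub_le_of_norm_fderiv_le' (𝕜 := ℂ) (s := closedBall c ‖x - c‖)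
      (f := h) (φ := fderiv ℂ h c) (x := c) (y := x) (C := 64 * M / R ^ 2 * ‖x - c‖)
      (fun z hz => aux_da hd (hs2 (hs hz))) (fun z hz => by
        refine (aux_lip hR hd hM (hs hz)).trans ?_
        have : ‖z - c‖ ≤ ‖x - c‖ := by simpa [dist_eq_norm] using hz
        gcongr)
      (convex_closedBall _ _) (mem_closedBall_self (norm_nonneg _)) (by simp [dist_eq_norm])
  calc _ ≤ _ := this
    _ = _ := by ring

theorem aux_strong {G : X → X →L[ℂ] Y} {c : X} {R M : ℝ} (hR : 0 < R)
    (hd : ∀ v, DifferentiableOn ℂ (fun x => G x v) (ball c R))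
    (hM : ∀ x ∈ ball c R, ‖G x‖ ≤ M) : DifferentiableAt ℂ G c := by
  have hM0 : 0 ≤ M := (norm_nonneg _).trans (hM c (mem_ball_self hR))
  have hMv : ∀ v, ∀ x ∈ ball c R, ‖G x v‖ ≤ M * ‖v‖ := fun v x hx =>
    (G x).le_of_opNorm_le (hM x hx) v
  have hda : ∀ v, DifferentiableAt ℂ (fun x => G x v) c :=
    fun v => aux_da (hd v) (mem_ball_self hR)
  let D : X →L[ℂ] X →L[ℂ] Y := LinearMap.mkContinuous₂ 
    (LinearMap.mk₂ ℂ (fun u v => fderiv ℂ (fun x => G x v) c u)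
      (fun u u' v => map_add _ _ _) (fun a u v => map_smul _ _ _)
      (fun u v v' => by
        simp only [map_add]
        rw [fderiv_fun_add (hda v) (hda v')]; rfl)
      (fun a u v => by
        simp only [map_smul]
        rw [fderiv_fun_const_smul (hda v) a]; rfl)) (2 * M / R) (by
      intro u v
      have := (fderiv ℂ (fun x => G x v) c).le_of_opNorm_le (aux_cauchy hR (hd v) (hMv v)) u
      simp only [LinearMap.mk₂_apply]
      calc _ ≤ _ := this
        _ = _ := by ring)
  have hD : ∀ u v, D u v = fderiv ℂ (fun x => G x v) c u := fun u v => rfl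
  have key : ∀ x ∈ ball c (R/8), ‖G x - G c - D (x - c)‖ ≤ 64 * M / R ^ 2 * ‖x - c‖ ^ 2 := by
    intro x hx
    refine ContinuousLinearMap.opNorm_le_bound _ (by positivity) (fun v => ?_)
    have := aux_taylor hR (hd v) (hMv v) hx
    calc _ ≤ _ := this
      _ = _ := by ring
  have : HasFDerivAt (fun x => G x - G c - D (x - c)) (0 : X →L[ℂ] X →L[ℂ] Y) c := by
    refine Asymptotics.IsBigO.hasFDerivAt (n := 2) ?_ (by norm_num)
    refine Asymptotics.IsBigO.of_bound (64 * M / R ^ 2) ?_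
    filter_upwards [ball_mem_nhds c (show 0 < R/8 by linarith)] with x hx
    simpa using key x hx
  have h2 : DifferentiableAt ℂ (fun x => (G x - G c - D (x - c)) + (G c + D (x - c))) c := by
    refine this.differentiableAt.add ?_
    fun_prop
  refine h2.congr_of_eventuallyEq (Eventually.of_forall fun x => ?_)
  simp only
  abel

theorem aux_limit [CompleteSpace Y] {F : ℕ → X → Y} {φ : X → Y} {c : X} {r : ℝ} (hr : 0 < r)
    (hF : ∀ n, DifferentiableOn ℂ (F n) (ball c r))
    (hu : TendstoUniformlyOn F φ atTop (ball c r)) : DifferentiableAt ℂ φ c := by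
  have hs2 : ball c (r/2) ⊆ ball c r := ball_subset_ball (by linarith)
  have hc : UniformCauchySeqOn (fun n x => fderiv ℂ (F n) x) atTop (ball c (r/2)) := by
    rw [Metric.uniformCauchySeqOn_iff]
    intro ε hε
    obtain ⟨N, hN⟩ := (Metric.uniformCauchySeqOn_iff.1 hu.uniformCauchySeqOn) (ε * r / 8)
      (by positivity)
    refine ⟨N, fun m hm n hn x hx => ?_⟩
    have := aux_cauchy' hr (h := fun x => F m x - F n x) ((hF m).sub (hF n))
      (M := ε * r / 8) (fun y hy => by
        rw [← dist_eq_norm]; exact (hN m hm n hn y hy).le) hx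
    rw [fderiv_fun_sub (aux_da (hF m) (hs2 hx)) (aux_da (hF n) (hs2 hx)), ← dist_eq_norm] at this
    refine this.trans_lt ?_
    have : 4 * (ε * r / 8) / r = ε / 2 := by field_simp; ring
    linarith
  have hlim : ∀ x ∈ ball c (r/2), ∃ L, Tendsto (fun n => fderiv ℂ (F n) x) atTop (𝓝 L) :=
    fun x hx => cauchySeq_tendsto_of_complete (hc.cauchySeq hx)
  choose! g' hg' using hlim
  exact (hasFDerivAt_of_tendstoUniformlyOn isOpen_ball (hc.tendstoUniformlyOn_of_tendsto hg')
    (fun n x hx => (aux_da (hF n) (hs2 hx)).hasFDerivAt)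
    (fun x hx => hu.tendsto_at (hs2 hx)) (mem_ball_self (half_pos hr))).differentiableAt

theorem aux_dir [CompleteSpace Y] {f : X → Y} {c : X} {R M : ℝ} (hR : 0 < R)
    (hd : DifferentiableOn ℂ f (ball c R)) (hM : ∀ x ∈ ball c R, ‖f x‖ ≤ M) (v : X) :
    DifferentiableAt ℂ (fun x => fderiv ℂ f x v) c := by
  have hM0 : 0 ≤ M := (norm_nonneg _).trans (hM c (mem_ball_self hR))
  obtain ⟨N, hN⟩ := exists_nat_gt (‖v‖ / (R / 16))
  have hNv : ∀ n : ℕ, ‖((n + N + 1 : ℕ) : ℂ)⁻¹ • v‖ < R / 16 := by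
    intro n
    rw [norm_smul, norm_inv, Complex.norm_natCast, inv_mul_lt_iff₀ (by positivity)]
    rw [div_lt_iff₀ (by positivity)] at hN
    refine hN.trans_le ?_
    gcongr
    omega
  have hmem : ∀ n : ℕ, ∀ x : X, x + ((n + N + 1 : ℕ) : ℂ)⁻¹ • v ∈ ball x ((R/2)/8) := by
    intro n x
    rw [mem_ball, dist_eq_norm, add_sub_cancel_left]
    have := hNv n
    linarith
  have hs2 : ball c (R/2) ⊆ ball c R := ball_subset_ball (by linarith)
  have hsub : ∀ x ∈ ball c (R/2), ball x (R/2) ⊆ ball c R := fun x hx => aux_sub hx (by linarith)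
  refine aux_limit (half_pos hR) 
    (F := fun n x => ((n + N + 1 : ℕ) : ℂ) • (f (x + ((n + N + 1 : ℕ) : ℂ)⁻¹ • v) - f x)) ?_ ?_
  · intro n x hx
    apply DifferentiableAt.differentiableWithinAt
    refine DifferentiableAt.const_smul (DifferentiableAt.sub ?_ (aux_da hd (hs2 hx))) _
    refine (differentiableAt_comp_add_right _).2 (aux_da hd (hsub x hx ?_))
    exact ball_subset_ball (by linarith) (hmem n x)
  · have hest : ∀ n : ℕ, ∀ x ∈ ball c (R/2), 
        dist (fderiv ℂ f x v) (((n + N + 1 : ℕ) : ℂ) • (f (x + ((n + N + 1 : ℕ) : ℂ)⁻¹ • v) - f x))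
        ≤ (64 * M / (R/2) ^ 2 * ‖v‖ ^ 2) * (1 / ((n : ℝ) + 1)) := by
      intro n x hx
      have h1 := aux_taylor (half_pos hR) (hd.mono (hsub x hx)) 
        (fun y hy => hM y (hsub x hx hy)) (hmem n x)
      have hne : ((n + N + 1 : ℕ) : ℂ) ≠ 0 := Nat.cast_ne_zero.2 (by omega)
      have hpos : (0 : ℝ) < ((n + N + 1 : ℕ) : ℝ) := by positivity
      rw [add_sub_cancel_left] at h1
      rw [dist_comm, dist_eq_norm]
      have e1 : ((n + N + 1 : ℕ) : ℂ) • (f (x + ((n + N + 1 : ℕ) : ℂ)⁻¹ • v) - f x)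
          - fderiv ℂ f x v = ((n + N + 1 : ℕ) : ℂ) • (f (x + ((n + N + 1 : ℕ) : ℂ)⁻¹ • v) - f x
            - fderiv ℂ f x (((n + N + 1 : ℕ) : ℂ)⁻¹ • v)) := by
        rw [map_smul, smul_sub _ (f (x + _) - f x), smul_inv_smul₀ hne]
      rw [e1, norm_smul, Complex.norm_natCast]
      rw [norm_smul, norm_inv, Complex.norm_natCast] at h1
      calc _ ≤ ((n + N + 1 : ℕ) : ℝ) * 
            (64 * M / (R / 2) ^ 2 * (((n + N + 1 : ℕ) : ℝ)⁻¹ * ‖v‖) ^ 2) := by gcongr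
        _ = (64 * M / (R/2) ^ 2 * ‖v‖ ^ 2) * (1 / ((n + N + 1 : ℕ) : ℝ)) := by field_simp
        _ ≤ _ := by
          gcongr
          push_cast
          linarith [(Nat.cast_nonneg N : (0:ℝ) ≤ N)]
    have ht : Tendsto (fun n : ℕ => (64 * M / (R/2) ^ 2 * ‖v‖ ^ 2) * (1 / ((n : ℝ) + 1)))
        atTop (𝓝 0) := by
      simpa using (tendsto_one_div_add_atTop_nhds_zero_nat (𝕜 := ℝ)).const_mul
        (64 * M / (R/2) ^ 2 * ‖v‖ ^ 2)
    rw [Metric.tendstoUniformlyOn_iff]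
    intro ε hε
    filter_upwards [ht.eventually_lt_const hε] with n hn x hx
    exact (hest n x hx).trans_lt hn

theorem aux_fderiv [CompleteSpace Y] {f : X → Y} {c : X} {R M : ℝ} (hR : 0 < R)
    (hd : DifferentiableOn ℂ f (ball c R)) (hM : ∀ x ∈ ball c R, ‖f x‖ ≤ M) :
    DifferentiableAt ℂ (fderiv ℂ f) c := by
  have hs2 : ball c (R/2) ⊆ ball c R := ball_subset_ball (by linarith)
  have hsub : ∀ x ∈ ball c (R/2), ball x (R/2) ⊆ ball c R := fun x hx => aux_sub hx (by linarith)
  refine aux_strong (half_pos hR) (fun v x hx => ?_) (fun x hx => aux_cauchy' hR hd hM hx)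
  exact (aux_dir (half_pos hR) (hd.mono (hsub x hx)) 
    (fun y hy => hM y (hsub x hx hy)) v).differentiableWithinAt

theorem aux_symm {e : ℕ → X}
    (hbasis : ∀ x : X, ∃! a : ℕ → ℂ,
      Filter.Tendsto (fun N => ∑ n ∈ Finset.range N, a n • e n) Filter.atTop (nhds x))
    (D : X →L[ℂ] X →L[ℂ] Y) (h : ∀ n m, D (e m) (e n) = D (e n) (e m)) (x y : X) :
    D x y = D y x := by
  have step : ∀ A B : X →L[ℂ] Y, (∀ n, A (e n) = B (e n)) → ∀ x, A x = B x := by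
    intro A B hAB x
    obtain ⟨a, ha, -⟩ := hbasis x
    have h1 := (A.continuous.tendsto x).comp ha
    have h2 := (B.continuous.tendsto x).comp ha
    refine tendsto_nhds_unique h1 (h2.congr fun N => ?_)
    simp [hAB]
  have s1 : ∀ n, ∀ x, D x (e n) = D (e n) x := fun n x =>
    step (D.flip (e n)) (D (e n)) (fun m => by simpa using h n m) x
  exact step (D x) (D.flip x) (fun n => by simpa using s1 n x) y

end aux15

/-- Let `X` be a complex Banach space with a Schauder basis `{eₙ}` and `Y` any
complex Banach space.  Then `Φ : 𝓗𝓛₀(B_X, Y) → 𝓗^∞_s(B_X, 𝓛(X,Y))`, `Φ f = df`, is a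
surjective isometry, where
`𝓗^∞_s(B_X, 𝓛(X,Y)) = {g ∈ 𝓗^∞(B_X, 𝓛(X,Y)) : e_k ∘ d(e_n ∘ g) = e_n ∘ d(e_k ∘ g) ∀ n, k}`. -/
theorem stmt15 (X Y : Type*) [NormedAddCommGroup X] [NormedSpace ℂ X] [CompleteSpace X]
    [NormedAddCommGroup Y] [NormedSpace ℂ Y] [CompleteSpace Y]
    (e : ℕ → X)
    (hbasis : ∀ x : X, ∃! a : ℕ → ℂ,
      Filter.Tendsto (fun N => ∑ n ∈ Finset.range N, a n • e n) Filter.atTop (nhds x)) :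
    let B := Metric.ball (0 : X) 1
    let HL0 : (X → Y) → Prop := fun f =>
      DifferentiableOn ℂ f B ∧ f 0 = 0 ∧ ∃ K : NNReal, LipschitzOnWith K f B
    let Hs : (X → (X →L[ℂ] Y)) → Prop := fun g =>
      DifferentiableOn ℂ g B ∧ (∃ C : ℝ, ∀ z ∈ B, ‖g z‖ ≤ C) ∧
      ∀ n m : ℕ, ∀ z ∈ B,
        fderiv ℂ (fun u => g u (e n)) z (e m) = fderiv ℂ (fun u => g u (e m)) z (e n)
    (∀ f : X → Y, HL0 f → Hs (fun z => fderiv ℂ f z)) ∧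
    (∀ f : X → Y, HL0 f →
      sInf {K : ℝ | 0 ≤ K ∧ ∀ x ∈ B, ∀ y ∈ B, ‖f x - f y‖ ≤ K * ‖x - y‖} =
        sSup {r : ℝ | ∃ z ∈ B, r = ‖fderiv ℂ f z‖}) ∧
    (∀ g : X → (X →L[ℂ] Y), Hs g →
      ∃ f : X → Y, HL0 f ∧ ∀ z ∈ B, fderiv ℂ f z = g z) := by
  intro B HL0 Hs
  have hBo : IsOpen B := isOpen_ball
  have h0B : (0 : X) ∈ B := mem_ball_self one_pos
  let _ : NormedSpace ℝ X := NormedSpace.restrictScalars ℝ ℂ X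
  let _ : NormedSpace ℝ Y := NormedSpace.restrictScalars ℝ ℂ Y
  have hBc : Convex ℝ B := convex_ball _ _
  have happ : ∀ (g : X → (X →L[ℂ] Y)) (z u v : X), DifferentiableAt ℂ g z →
      fderiv ℂ (fun x => g x v) z u = fderiv ℂ g z u v := by
    intro g z u v hg
    have := (hg.hasFDerivAt.clm_apply (hasFDerivAt_const v z)).fderiv
    rw [this]; simp
  refine ⟨?_, ?_, ?_⟩
  · rintro f ⟨hd, hf0, K, hK⟩
    have hb : ∀ x ∈ B, ‖f x‖ ≤ K := by
      intro x hx
      have h1 := hK.norm_sub_le hx h0B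
      rw [hf0, sub_zero, sub_zero] at h1
      have h2 : ‖x‖ < 1 := by simpa [B] using hx
      nlinarith [K.coe_nonneg]
    have hdd : ∀ z ∈ B, DifferentiableAt ℂ (fderiv ℂ f) z := by
      intro z hz
      obtain ⟨R, hR, hs⟩ := Metric.isOpen_iff.1 hBo z hz
      exact aux_fderiv hR (hd.mono hs) (fun x hx => hb x (hs hx))
    refine ⟨fun z hz => (hdd z hz).differentiableWithinAt, ⟨K, fun z hz => ?_⟩, ?_⟩
    · exact norm_fderiv_le_of_lipschitzOn ℂ (hBo.mem_nhds hz) hK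
    · intro n m z hz
      rw [happ _ _ _ _ (hdd z hz), happ _ _ _ _ (hdd z hz)]
      refine second_derivative_symmetric_of_eventually (f := f) ?_ (hdd z hz).hasFDerivAt _ _
      filter_upwards [hBo.mem_nhds hz] with y hy
      exact (hd.differentiableAt (hBo.mem_nhds hy)).hasFDerivAt
  · rintro f ⟨hd, hf0, K, hK⟩
    have hbdd : BddAbove {r : ℝ | ∃ z ∈ B, r = ‖fderiv ℂ f z‖} := by
      refine ⟨K, ?_⟩
      rintro r ⟨z, hz, rfl⟩
      exact norm_fderiv_le_of_lipschitzOn ℂ (hBo.mem_nhds hz) hK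
    have hmem : sSup {r : ℝ | ∃ z ∈ B, r = ‖fderiv ℂ f z‖} ∈
        {K : ℝ | 0 ≤ K ∧ ∀ x ∈ B, ∀ y ∈ B, ‖f x - f y‖ ≤ K * ‖x - y‖} := by
      refine ⟨(norm_nonneg _).trans (le_csSup hbdd ⟨0, h0B, rfl⟩), fun x hx y hy => ?_⟩
      exact Convex.norm_image_sub_le_of_norm_fderiv_le (𝕜 := ℂ)
        (fun z hz => hd.differentiableAt (hBo.mem_nhds hz))
        (fun z hz => le_csSup hbdd ⟨z, hz, rfl⟩) hBc hy hx
    apply le_antisymm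
    · exact csInf_le ⟨0, fun k hk => hk.1⟩ hmem
    · refine le_csInf ⟨_, hmem⟩ ?_
      rintro k ⟨hk0, hk⟩
      refine csSup_le ⟨_, 0, h0B, rfl⟩ ?_
      rintro r ⟨z, hz, rfl⟩
      refine norm_fderiv_le_of_lip' ℂ hk0 ?_
      filter_upwards [hBo.mem_nhds hz] with x hx using hk x hx z hz
  · rintro g ⟨hd, ⟨C, hC⟩, hsym⟩
    have hda : ∀ z ∈ B, DifferentiableAt ℂ g z := fun z hz =>
      hd.differentiableAt (hBo.mem_nhds hz)
    obtain ⟨f, hf⟩ := hBc.exists_forall_hasFDerivAt_of_fderiv_symmetric hBo (ω := g)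
      (fun z hz => ((hda z hz).restrictScalars ℝ).differentiableWithinAt) (by
        intro a ha x y
        rw [(hda a ha).fderiv_restrictScalars ℝ]
        refine aux_symm hbasis (fderiv ℂ g a) (fun n m => ?_) x y
        rw [← happ _ _ _ _ (hda a ha), ← happ _ _ _ _ (hda a ha)]
        exact hsym n m a ha)
    have hf' : ∀ z ∈ B, HasFDerivAt (fun x => f x - f 0) (g z) z := fun z hz =>
      (hf z hz).sub_const _
    refine ⟨fun x => f x - f 0, ⟨fun z hz => (hf' z hz).differentiableAt.differentiableWithinAt,
      sub_self _, ⟨C.toNNReal, ?_⟩⟩, fun z hz => (hf' z hz).fderiv⟩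
    refine Convex.lipschitzOnWith_of_nnnorm_fderiv_le (𝕜 := ℂ)
      (fun z hz => (hf' z hz).differentiableAt) (fun z hz => ?_) hBc
    rw [(hf' z hz).fderiv]
    exact NNReal.le_toNNReal_of_coe_le (hC z hz)
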